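/- arXiv:2505.24703 — 2 statements merged into one kernel-verified Lean document; each statement's English description precedes it below -/
import Mathlib

section
/- Let F : X → L be a single-label classifier into a finite label type L, M a finite nonempty set of masks that is R-covering for a set R of patch regions, x ∈ X, and y ∈ L. If F((x ∘ m₀) ∘ m₁) = y for all pairs m₀, m₁ ∈ M, then for every adversarial image x' ∈ S(x,R) the double-masking inference procedure returns the correct label: DoubleMaskingInfer(F, M, x') = y. (Correctness of PatchCleanser's double-masking defense, Theorem 3.) -/
/-- Images with width `w`, height `h`, and `γ` channels. -/
abbrev Img (w h γ : ℕ) := Fin w → Fin h → Fin γ → ℝ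

/-- The patched image: pixels inside the patch region (`r i j = false`) are replaced
by adversarial content `x''`. -/
def patch {w h γ : ℕ} (x : Img w h γ) (r : Fin w → Fin h → Bool) (x'' : Img w h γ) :
    Img w h γ :=
  fun i j k => if r i j then x i j k else x'' i j k

/-- The patch threat model `S(x, R)`. -/
def patchSet {w h γ : ℕ} (x : Img w h γ) (R : Set (Fin w → Fin h → Bool)) :
    Set (Img w h γ) :=
  { x' | ∃ r ∈ R, ∃ x'' : Img w h γ, x' = patch x r x'' }

/-- Masking an image: occluded pixels (`m i j = false`) are set to `0`. -/
def maskImg {w h γ : ℕ} (x : Img w h γ) (m : Fin w → Fin h → Bool) : Img w h γ :=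
  fun i j k => if m i j then x i j k else 0

noncomputable section
open scoped Classical

/-- Iterate over a list of (disagreer) masks in order; for the first one whose
second-round predictions all agree (consensus), return its first-round prediction. -/
def firstConsensus {w h γ : ℕ} {L : Type*} (F : Img w h γ → L)
    (M : Finset (Fin w → Fin h → Bool)) (x : Img w h γ) :
    List (Fin w → Fin h → Bool) → Option L
  | [] => none
  | m :: rest =>
      if ∀ m₁ ∈ M, ∀ m₂ ∈ M,
          F (maskImg (maskImg x m) m₁) = F (maskImg (maskImg x m) m₂) then
        some (F (maskImg x m))
      else firstConsensus F M x rest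

/-- A label attaining the maximum multiplicity among the first-round masked
predictions (ties broken by a fixed rule). -/
def majLabel {w h γ : ℕ} {L : Type*} [Nonempty L] (F : Img w h γ → L)
    (M : Finset (Fin w → Fin h → Bool)) (x : Img w h γ) : L :=
  if hM : M.Nonempty then
    Classical.choose ((M.image fun m => F (maskImg x m)).exists_max_image
      (fun l => (M.filter fun m => F (maskImg x m) = l).card) (hM.image _))
  else Classical.arbitrary L

/-- PatchCleanser's double-masking inference procedure: return the first-round majority
label if there are no disagreers; otherwise iterate over the disagreers in a fixed
order, returning the first-round prediction of the first disagreer achieving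
second-round consensus; if none does, return the majority label. -/
def DoubleMaskingInfer {w h γ : ℕ} {L : Type*} [Nonempty L] (F : Img w h γ → L)
    (M : Finset (Fin w → Fin h → Bool)) (x : Img w h γ) : L :=
  let ymaj := majLabel F M x
  let D := M.filter fun m => F (maskImg x m) ≠ ymaj
  match firstConsensus F M x D.toList with
  | some l => l
  | none => ymaj

/-!
Masking is idempotent and commutative. Hence if two masks `m`, `m'` of `M` both reach second-round
consensus on `x`, then `F (x ∘ m) = F ((x ∘ m) ∘ m') = F ((x ∘ m') ∘ m) = F (x ∘ m')`. So as soon as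
some mask `m` of `M` reaches consensus, inference returns `F (x ∘ m)`: either the procedure stops at
a disagreer with consensus, which predicts the same label, or `m` is not a disagreer and the
majority label is `F (x ∘ m)`. On an attacked image, a mask covering the patch reaches consensus
because it removes every trace of the attack.
-/

section Masking

variable {w h γ : ℕ}

/-- The mask `m` covers the patch region `r`: every pixel that `m` keeps lies outside the patch.
The value `true` marks the kept pixels of a mask and the pixels outside the patch of a region. -/
def Covers (m r : Fin w → Fin h → Bool) : Prop :=
  ∀ i j, m i j = true → r i j = true

theorem maskImg_maskImg_self (x : Img w h γ) (m : Fin w → Fin h → Bool) :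
    maskImg (maskImg x m) m = maskImg x m := by
  funext i j k
  simp +contextual [maskImg]

theorem maskImg_comm (x : Img w h γ) (m m' : Fin w → Fin h → Bool) :
    maskImg (maskImg x m) m' = maskImg (maskImg x m') m := by
  funext i j k
  by_cases hm : m i j = true <;> simp [maskImg, hm]

theorem Covers.maskImg_patch {m r : Fin w → Fin h → Bool} (hmr : Covers m r)
    (x x'' : Img w h γ) : maskImg (patch x r x'') m = maskImg x m := by
  funext i j k
  by_cases hm : m i j = true
  · simp [maskImg, patch, hm, hmr i j hm]
  · simp [maskImg, hm]

end Masking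

section Inference

variable {w h γ : ℕ} {L : Type*} {F : Img w h γ → L} {M : Finset (Fin w → Fin h → Bool)}
  {x : Img w h γ} {m m' : Fin w → Fin h → Bool}

/-- The predictions of `F` on the maskings of `z` by the members of `M` all agree. The second round
of double masking tests this for `z = maskImg x m`, with `m` a disagreer. -/
def HasConsensus (F : Img w h γ → L) (M : Finset (Fin w → Fin h → Bool)) (z : Img w h γ) : Prop :=
  ∀ m₁ ∈ M, ∀ m₂ ∈ M, F (maskImg z m₁) = F (maskImg z m₂)

theorem hasConsensus_of_forall_eq {z : Img w h γ} {y : L} (hz : ∀ m ∈ M, F (maskImg z m) = y) :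
    HasConsensus F M z :=
  fun m₁ hm₁ m₂ hm₂ => (hz m₁ hm₁).trans (hz m₂ hm₂).symm

theorem HasConsensus.apply_maskImg_eq (hc : HasConsensus F M (maskImg x m))
    (hc' : HasConsensus F M (maskImg x m')) (hm : m ∈ M) (hm' : m' ∈ M) :
    F (maskImg x m) = F (maskImg x m') :=
  calc
    F (maskImg x m) = F (maskImg (maskImg x m) m) := by rw [maskImg_maskImg_self]
    _ = F (maskImg (maskImg x m) m') := hc m hm m' hm'
    _ = F (maskImg (maskImg x m') m) := by rw [maskImg_comm]
    _ = F (maskImg (maskImg x m') m') := hc' m hm m' hm'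
    _ = F (maskImg x m') := by rw [maskImg_maskImg_self]

theorem firstConsensus_eq_map_find? (F : Img w h γ → L) (M : Finset (Fin w → Fin h → Bool))
    (x : Img w h γ) (l : List (Fin w → Fin h → Bool)) :
    firstConsensus F M x l =
      (l.find? fun m => HasConsensus F M (maskImg x m)).map fun m => F (maskImg x m) := by
  induction l with
  | nil => rfl
  | cons m l ih =>
    by_cases hc : HasConsensus F M (maskImg x m)
    · rw [List.find?_cons_of_pos (by simpa only [decide_eq_true_eq])]
      exact if_pos hc
    · rw [List.find?_cons_of_neg (by simpa only [decide_eq_true_eq]), ← ih]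
      exact if_neg hc

theorem exists_hasConsensus_of_firstConsensus_eq_some {l : List (Fin w → Fin h → Bool)} {a : L}
    (hl : firstConsensus F M x l = some a) :
    ∃ m ∈ l, HasConsensus F M (maskImg x m) ∧ F (maskImg x m) = a := by
  rw [firstConsensus_eq_map_find?] at hl
  obtain ⟨m, hfind, hma⟩ := Option.map_eq_some_iff.1 hl
  have hc : HasConsensus F M (maskImg x m) := by
    simpa only [decide_eq_true_eq] using List.find?_some hfind
  exact ⟨m, List.mem_of_find?_eq_some hfind, hc, hma⟩

theorem not_hasConsensus_of_firstConsensus_eq_none {l : List (Fin w → Fin h → Bool)}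
    (hl : firstConsensus F M x l = none) (hm : m ∈ l) : ¬ HasConsensus F M (maskImg x m) := by
  rw [firstConsensus_eq_map_find?, Option.map_eq_none_iff, List.find?_eq_none] at hl
  simpa only [decide_eq_true_eq] using hl m hm

theorem doubleMaskingInfer_eq_of_hasConsensus [Nonempty L] (hm : m ∈ M)
    (hc : HasConsensus F M (maskImg x m)) : DoubleMaskingInfer F M x = F (maskImg x m) := by
  simp only [DoubleMaskingInfer]
  split
  case h_1 a hsome =>
    obtain ⟨m', hm'D, hc', rfl⟩ := exists_hasConsensus_of_firstConsensus_eq_some hsome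
    have hm' : m' ∈ M := Finset.mem_of_mem_filter m' (Finset.mem_toList.1 hm'D)
    exact hc'.apply_maskImg_eq hc hm' hm
  case h_2 hnone =>
    by_contra hne
    have hmD : m ∈ (M.filter fun m => F (maskImg x m) ≠ majLabel F M x).toList :=
      Finset.mem_toList.2 (Finset.mem_filter.2 ⟨hm, Ne.symm hne⟩)
    exact not_hasConsensus_of_firstConsensus_eq_none hnone hmD hc

theorem double_masking_correct_general [Nonempty L] (F : Img w h γ → L)
    (M : Finset (Fin w → Fin h → Bool)) (R : Set (Fin w → Fin h → Bool)) (x : Img w h γ) (y : L)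
    (hcert : ∀ r ∈ R, ∃ m ∈ M, Covers m r ∧ ∀ m₁ ∈ M, F (maskImg (maskImg x m) m₁) = y) :
    ∀ x' ∈ patchSet x R, DoubleMaskingInfer F M x' = y := by
  rintro _ ⟨r, hr, x'', rfl⟩
  obtain ⟨m, hm, hmr, hy⟩ := hcert r hr
  have hmask : maskImg (patch x r x'') m = maskImg x m := hmr.maskImg_patch x x''
  have hc : HasConsensus F M (maskImg (patch x r x'') m) :=
    hmask ▸ hasConsensus_of_forall_eq hy
  calc
    DoubleMaskingInfer F M (patch x r x'') = F (maskImg (patch x r x'') m) :=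
      doubleMaskingInfer_eq_of_hasConsensus hm hc
    _ = F (maskImg (maskImg x m) m) := by rw [hmask, maskImg_maskImg_self]
    _ = y := hy m hm

end Inference

/-- Correctness of PatchCleanser's double-masking defense (Theorem 3): if the mask set
`M` is `R`-covering and all two-mask predictions on `x` equal `y`, then double-masking
inference returns `y` on every adversarial image `x' ∈ S(x, R)`. -/
theorem double_masking_correct {w h γ : ℕ} {L : Type*} [Fintype L] [Nonempty L]
    (F : Img w h γ → L) (M : Finset (Fin w → Fin h → Bool)) (hM : M.Nonempty)
    (R : Set (Fin w → Fin h → Bool))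
    (hcover : ∀ r ∈ R, ∃ m ∈ M, ∀ i j, m i j = true → r i j = true)
    (x : Img w h γ) (y : L)
    (hcert : ∀ m₀ ∈ M, ∀ m₁ ∈ M, F (maskImg (maskImg x m₀) m₁) = y) :
    ∀ x' ∈ patchSet x R, DoubleMaskingInfer F M x' = y := by
  refine double_masking_correct_general F M R x y fun r hr => ?_
  obtain ⟨m, hm, hmr⟩ := hcover r hr
  exact ⟨m, hm, hmr, hcert m hm⟩

end
end

section
/- Let x ∈ X, R a finite set of patch regions, y : Fin c → Bool, infer : Fin c → X → Bool, and κ : Fin c → Bool such that for every class i with κ i = true one has infer i x' = y i for every x' ∈ S(x,R). Let I := {i : κ i = false ∧ y i = true}, and suppose for each i ∈ I there is λ i : R → Bool with: λ i r = true → infer i (patch(x,r,x'')) = true for all x'' ∈ X. Set TP_lower := |{i : κ i = true ∧ y i = true}|, FN_new := max_{r' ∈ R} |{i ∈ I : λ i r' = false}|, and TP_new := TP_lower + (|I| − FN_new). Then for every r ∈ R and every x'' ∈ X, the prediction ŷ := (fun i => infer i (patch(x,r,x''))) satisfies (TP_new : ℝ)/(TP_new + FN_new) ≤ TP(y,ŷ)/(TP(y,ŷ)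 + FN(y,ŷ)). (The location-aware certified recall lower-bounds the true recall under any single-patch attack.) -/
/-- True-positive count. -/
def TP {c : ℕ} (y yhat : Fin c → Bool) : ℕ :=
  (Finset.univ.filter fun i : Fin c => y i = true ∧ yhat i = true).card

/-- False-negative count. -/
def FN {c : ℕ} (y yhat : Fin c → Bool) : ℕ :=
  (Finset.univ.filter fun i : Fin c => y i = true ∧ yhat i = false).card

theorem div_add_le_div_add_of_le_of_le {K : Type*} [Field K] [LinearOrder K]
    [IsStrictOrderedRing K] {a b p q : K} (ha : 0 ≤ a) (hq : 0 ≤ q) (hab : a ≤ b) (hqp : q ≤ p) :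
    a / (a + p) ≤ b / (b + q) := by
  have hb : 0 ≤ b := ha.trans hab
  have hp : 0 ≤ p := hq.trans hqp
  obtain rfl | ha_pos := ha.eq_or_lt
  · rw [zero_div]
    positivity
  · have hb_pos : 0 < b := ha_pos.trans_le hab
    have cross : a * q ≤ b * p := mul_le_mul hab hqp hq hb
    rw [div_le_div_iff₀ (by positivity) (by positivity)]
    linarith

section Recall

variable {c : ℕ} {y κ lam yhat : Fin c → Bool}

theorem TP_add_FN (y yhat : Fin c → Bool) :
    TP y yhat + FN y yhat = (Finset.univ.filter fun i => y i = true).card := by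
  simp only [TP, FN, ← Finset.filter_filter, ← Bool.not_eq_true]
  exact Finset.card_filter_add_card_filter_not _

/-- The classes present in the image whose prediction `κ` certifies against every patch; their
number is `TP_lower`. -/
def certifiedPositives (y κ : Fin c → Bool) : Finset (Fin c) :=
  Finset.univ.filter fun i => κ i = true ∧ y i = true

/-- The index set `I` of the classes present in the image whose prediction is not certified by `κ`
against every patch; a location-aware certificate examines these one patch region at a time. -/
def uncertifiedPositives (y κ : Fin c → Bool) : Finset (Fin c) :=
  Finset.univ.filter fun i => κ i = false ∧ y i = true

theorem mem_certifiedPositives {i : Fin c} :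
    i ∈ certifiedPositives y κ ↔ κ i = true ∧ y i = true := by
  simp [certifiedPositives]

theorem mem_uncertifiedPositives {i : Fin c} :
    i ∈ uncertifiedPositives y κ ↔ κ i = false ∧ y i = true := by
  simp [uncertifiedPositives]

theorem card_certifiedPositives_add_card_uncertifiedPositives (y κ : Fin c → Bool) :
    (certifiedPositives y κ).card + (uncertifiedPositives y κ).card =
      (Finset.univ.filter fun i => y i = true).card := by
  -- `κ`, read as a prediction, has these two sets as its true positives and false negatives.
  simpa only [certifiedPositives, uncertifiedPositives, TP, FN, and_comm] using TP_add_FN y κ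

theorem FN_le_card_filter_uncertifiedPositives
    (hcert : ∀ i ∈ certifiedPositives y κ, yhat i = true)
    (hlam : ∀ i ∈ uncertifiedPositives y κ, lam i = true → yhat i = true) :
    FN y yhat ≤ ((uncertifiedPositives y κ).filter fun i => lam i = false).card := by
  refine Finset.card_le_card fun i hi => ?_
  obtain ⟨-, y_true, yhat_false⟩ := Finset.mem_filter.mp hi
  have yhat_ne : yhat i ≠ true := Bool.eq_false_iff.mp yhat_false
  have κ_false : κ i = false := Bool.eq_false_iff.mpr fun κ_true =>
    yhat_ne (hcert i (mem_certifiedPositives.mpr ⟨κ_true, y_true⟩))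
  have i_mem : i ∈ uncertifiedPositives y κ := mem_uncertifiedPositives.mpr ⟨κ_false, y_true⟩
  exact Finset.mem_filter.mpr ⟨i_mem, Bool.eq_false_iff.mpr fun h => yhat_ne (hlam i i_mem h)⟩

theorem card_certifiedPositives_add_card_sub_le_TP {n : ℕ}
    (hcert : ∀ i ∈ certifiedPositives y κ, yhat i = true)
    (hlam : ∀ i ∈ uncertifiedPositives y κ, lam i = true → yhat i = true)
    (hn : ((uncertifiedPositives y κ).filter fun i => lam i = false).card ≤ n) :
    (certifiedPositives y κ).card + ((uncertifiedPositives y κ).card - n) ≤ TP y yhat := by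
  have FN_le := FN_le_card_filter_uncertifiedPositives hcert hlam
  have vulnerable_le := Finset.card_filter_le (uncertifiedPositives y κ) fun i => lam i = false
  have same_positives : (certifiedPositives y κ).card + (uncertifiedPositives y κ).card =
      TP y yhat + FN y yhat :=
    (card_certifiedPositives_add_card_uncertifiedPositives y κ).trans (TP_add_FN y yhat).symm
  omega

end Recall

theorem location_aware_certified_recall_general {c : ℕ} {L C X : Type*}
    (attack : L → C → X) (R : Set L)
    (y : Fin c → Bool) (infer : Fin c → X → Bool) (κ : Fin c → Bool)
    (hκ : ∀ i, κ i = true → ∀ r ∈ R, ∀ a, infer i (attack r a) = y i)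
    (lam : Fin c → L → Bool)
    (hlam : ∀ i ∈ uncertifiedPositives y κ, ∀ r ∈ R, lam i r = true →
      ∀ a, infer i (attack r a) = true)
    {FNnew TPnew : ℕ}
    (hFNnew : ∀ r ∈ R, ((uncertifiedPositives y κ).filter fun i => lam i r = false).card ≤ FNnew)
    (hTPnew : TPnew = (certifiedPositives y κ).card + ((uncertifiedPositives y κ).card - FNnew)) :
    ∀ r ∈ R, ∀ a,
      (TPnew : ℝ) / (TPnew + FNnew)
        ≤ (TP y (fun i => infer i (attack r a)) : ℝ)
          / (TP y (fun i => infer i (attack r a)) + FN y (fun i => infer i (attack r a))) := by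
  intro r hr a
  set yhat : Fin c → Bool := fun i => infer i (attack r a)
  have certified_detected : ∀ i ∈ certifiedPositives y κ, yhat i = true := fun i hi =>
    have ⟨κ_true, y_true⟩ := mem_certifiedPositives.mp hi
    (hκ i κ_true r hr a).trans y_true
  have robust_detected : ∀ i ∈ uncertifiedPositives y κ, lam i r = true → yhat i = true :=
    fun i hi h => hlam i hi r hr h a
  have TPnew_le : TPnew ≤ TP y yhat :=
    hTPnew.trans_le (card_certifiedPositives_add_card_sub_le_TP
      certified_detected robust_detected (hFNnew r hr))
  have FN_le : FN y yhat ≤ FNnew :=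
    (FN_le_card_filter_uncertifiedPositives certified_detected robust_detected).trans (hFNnew r hr)
  exact div_add_le_div_add_of_le_of_le (Nat.cast_nonneg _) (Nat.cast_nonneg _)
    (Nat.cast_le.mpr TPnew_le) (Nat.cast_le.mpr FN_le)

/-- The location-aware certified recall `TP_new / (TP_new + FN_new)` lower-bounds the
true recall `TP / (TP + FN)` under any single-patch attack. -/
theorem location_aware_certified_recall {w h γ c : ℕ}
    (x : Img w h γ) (R : Finset (Fin w → Fin h → Bool))
    (y : Fin c → Bool) (infer : Fin c → Img w h γ → Bool) (κ : Fin c → Bool)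
    (hκ : ∀ i : Fin c, κ i = true →
      ∀ x' ∈ patchSet x (↑R : Set (Fin w → Fin h → Bool)), infer i x' = y i)
    (I : Finset (Fin c))
    (hIdef : I = Finset.univ.filter fun i : Fin c => κ i = false ∧ y i = true)
    (lam : Fin c → (Fin w → Fin h → Bool) → Bool)
    (hlam : ∀ i ∈ I, ∀ r ∈ R, lam i r = true →
      ∀ x'' : Img w h γ, infer i (patch x r x'') = true)
    (TPlower FNnew TPnew : ℕ)
    (hTP : TPlower = (Finset.univ.filter fun i : Fin c => κ i = true ∧ y i = true).card)
    (hFNnew : FNnew = R.sup fun r' => (I.filter fun i => lam i r' = false).card)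
    (hTPnew : TPnew = TPlower + (I.card - FNnew)) :
    ∀ r ∈ R, ∀ x'' : Img w h γ,
      (TPnew : ℝ) / (TPnew + FNnew)
        ≤ (TP y (fun i => infer i (patch x r x'')) : ℝ)
          / (TP y (fun i => infer i (patch x r x''))
              + FN y (fun i => infer i (patch x r x''))) := by
  subst hIdef hTP
  exact location_aware_certified_recall_general (patch x) R y infer κ
    (fun i hi r hr x'' => hκ i hi _ ⟨r, hr, x'', rfl⟩) lam hlam
    (Finset.sup_le_iff.mp hFNnew.ge) hTPnew
end
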